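/- For the full shift T on X = ∏_{n∈ℤ} M over a perfect Polish metric space M, the set {μ ∈ M(T) : R̄(x,y) = +∞ for (μ×μ)-a.e. (x,y) ∈ X×X} of invariant measures whose upper quantitative waiting time indicator is infinite (μ×μ)-almost everywhere is a residual subset of M(T). -/

import Mathlib

open Filter MeasureTheory Topology Metric Set
open scoped ENNReal NNReal

noncomputable section
attribute [local instance] Classical.propDecidable

/-- The full (bilateral) shift on the product space `ℤ → M`: `(T x) i = x (i - 1)`. -/
def fullShift {M : Type*} (x : ℤ → M) : ℤ → M := fun i => x (i - 1)

/-- The metric `d(x,y) = ∑_{n ∈ ℤ} 2^{-|n|} ρ(xₙ,yₙ)/(1 + ρ(xₙ,yₙ))` on `ℤ → M`,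
compatible with the product topology. -/
def shiftDist {M : Type*} [MetricSpace M] (x y : ℤ → M) : ℝ :=
  ∑' n : ℤ, (1 / 2 : ℝ) ^ n.natAbs * (dist (x n) (y n) / (1 + dist (x n) (y n)))

/-- Lower local dimension `d̲_μ(x) = liminf_{ε → 0⁺} log μ(B(x,ε)) / log ε` of `μ` at `x`,
with respect to the distance function `d`; by convention it is `∞` if some ball
centered at `x` has measure zero. -/
def lowerLocalDim {X : Type*} [MeasurableSpace X] (d : X → X → ℝ)
    (μ : Measure X) (x : X) : ℝ≥0∞ :=
  if ∃ ε > 0, μ {y | d x y < ε} = 0 then ⊤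
  else liminf (fun ε : ℝ =>
    ENNReal.ofReal (Real.log (μ {y | d x y < ε}).toReal / Real.log ε)) (𝓝[>] (0 : ℝ))

/-- Upper local dimension `d̄_μ(x) = limsup_{ε → 0⁺} log μ(B(x,ε)) / log ε`. -/
def upperLocalDim {X : Type*} [MeasurableSpace X] (d : X → X → ℝ)
    (μ : Measure X) (x : X) : ℝ≥0∞ :=
  if ∃ ε > 0, μ {y | d x y < ε} = 0 then ⊤
  else limsup (fun ε : ℝ =>
    ENNReal.ofReal (Real.log (μ {y | d x y < ε}).toReal / Real.log ε)) (𝓝[>] (0 : ℝ))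

/-- The ratio `log τ_r(x) / (- log r)`, where `τ_r(x) = inf {n ≥ 1 | Tⁿ x ∈ B̄(x,r)}` is the
first return time of `x` to the closed ball `B̄(x,r)`; by convention it is `∞` when the
return time is infinite. -/
def recRatio {X : Type*} (d : X → X → ℝ) (T : X → X) (x : X) (r : ℝ) : ℝ≥0∞ :=
  if ∃ n : ℕ, 1 ≤ n ∧ d (T^[n] x) x ≤ r then
    ENNReal.ofReal
      (Real.log ((sInf {n : ℕ | 1 ≤ n ∧ d (T^[n] x) x ≤ r} : ℕ) : ℝ) / (- Real.log r))
  else ⊤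

/-- Lower recurrence rate `R̲(x) = liminf_{r → 0⁺} log τ_r(x) / (- log r)`. -/
def lowerRecRate {X : Type*} (d : X → X → ℝ) (T : X → X) (x : X) : ℝ≥0∞ :=
  liminf (recRatio d T x) (𝓝[>] (0 : ℝ))

/-- Upper recurrence rate `R̄(x) = limsup_{r → 0⁺} log τ_r(x) / (- log r)`. -/
def upperRecRate {X : Type*} (d : X → X → ℝ) (T : X → X) (x : X) : ℝ≥0∞ :=
  limsup (recRatio d T x) (𝓝[>] (0 : ℝ))

/-- The ratio `log τ_r(x,y) / (- log r)`, where `τ_r(x,y) = inf {n ≥ 1 | Tⁿ x ∈ B̄(y,r)}` is the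
first entrance time of the orbit of `x` into the closed ball `B̄(y,r)`; by convention `∞`
when the entrance time is infinite. -/
def waitRatio {X : Type*} (d : X → X → ℝ) (T : X → X) (x y : X) (r : ℝ) : ℝ≥0∞ :=
  if ∃ n : ℕ, 1 ≤ n ∧ d (T^[n] x) y ≤ r then
    ENNReal.ofReal
      (Real.log ((sInf {n : ℕ | 1 ≤ n ∧ d (T^[n] x) y ≤ r} : ℕ) : ℝ) / (- Real.log r))
  else ⊤

/-- Lower quantitative waiting time indicator `R̲(x,y)`. -/
def lowerWaitRate {X : Type*} (d : X → X → ℝ) (T : X → X) (x y : X) : ℝ≥0∞ :=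
  liminf (waitRatio d T x y) (𝓝[>] (0 : ℝ))

/-- Upper quantitative waiting time indicator `R̄(x,y)`. -/
def upperWaitRate {X : Type*} (d : X → X → ℝ) (T : X → X) (x y : X) : ℝ≥0∞ :=
  limsup (waitRatio d T x y) (𝓝[>] (0 : ℝ))

/-- The entropy `H(P) = ∑_c -μ(P_c) log μ(P_c)` of the finite measurable partition
`P_c = f ⁻¹ {c}` of `X` induced by a map `f` into a finite set. -/
def partitionEntropy {X F : Type*} [MeasurableSpace X] [Fintype F]
    (μ : Measure X) (f : X → F) : ℝ :=
  ∑ c : F, Real.negMulLog ((μ (f ⁻¹' {c})).toReal)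

/-- The Kolmogorov–Sinai (measure-theoretic) entropy `h_μ(T)`: the supremum, over all finite
measurable partitions (coded by measurable maps `f : X → Fin k`), of the limit of
`H(⋁_{i<n} T⁻ⁱ P) / n`. -/
def kolmogorovSinaiEntropy {X : Type*} [MeasurableSpace X] (T : X → X) (μ : Measure X) :
    ℝ≥0∞ :=
  ⨆ (k : ℕ) (f : X → Fin k) (_ : Measurable f),
    ENNReal.ofReal
      (liminf (fun n : ℕ =>
        partitionEntropy μ (fun x (i : Fin n) => f (T^[(i : ℕ)] x)) / n) atTop)

end

/-!
For each `N`, the pairs `(x, y)` with `τ_r(x, y) > r⁻ᴺ` for some `r < 1 / (N + 1)` form an open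
set `L N`, and `R̄ = ∞` on `⋂ N, L N`. By the portmanteau theorem the measures with
`(μ × μ)((L N)ᶜ) < ε` form an open subset of `M(T)`, so it suffices to prove that it is dense.

Given an invariant `μ` and `k ≥ 1`, perfectness of `M` yields finitely valued Borel maps
`φ₁, …, φₖ : M → M`, each close to the identity, with pairwise disjoint ranges. Applied
coordinatewise they commute with `T`, so the average `ν` of the `k` push-forwards of `μ` is
invariant and close to `μ`. If `x` and `y` have all their coordinates in two different ranges, the
orbit of `x` stays a positive distance away from `y`, whence `(x, y) ∈ L N`. The remaining pairs
use the same `φᵢ` twice, so they carry `ν × ν`-mass at most `1 / k`.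
-/

section Entrance

variable {X : Type*} {d : X → X → ℝ} {T : X → X} {x y : X} {N : ℕ}

theorem natCast_le_waitRatio {r : ℝ} (hr₀ : 0 < r) (hr₁ : r < 1)
    (h : ∀ n ∈ Icc 1 ⌊r⁻¹ ^ N⌋₊, r < d (T^[n] x) y) : (N : ℝ≥0∞) ≤ waitRatio d T x y r := by
  unfold waitRatio
  split_ifs with hex
  · obtain ⟨one_le, dist_le⟩ := Nat.sInf_mem hex
    set τ := sInf {n : ℕ | 1 ≤ n ∧ d (T^[n] x) y ≤ r}
    have hτ : r⁻¹ ^ N < τ :=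
      Nat.lt_of_floor_lt <| not_le.1 fun hle => (h τ ⟨one_le, hle⟩).not_ge dist_le
    have hlog : N * -Real.log r ≤ Real.log τ := by
      simpa using Real.log_le_log (by positivity) hτ.le
    rw [← ENNReal.ofReal_natCast]
    exact ENNReal.ofReal_le_ofReal <|
      (le_div_iff₀ (neg_pos.2 (Real.log_neg hr₀ hr₁))).2 hlog
  · exact le_top

/-- The set of pairs `(x, y)` such that, at some scale `0 < r < δ`, the orbit of `x` enters the
closed `d`-ball of radius `r` around `y` only after time `r⁻ᴺ`, i.e. `log τ_r(x, y) / (-log r) > N`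
when `r < 1`. -/
def lateEntranceSet (d : X → X → ℝ) (T : X → X) (N : ℕ) (δ : ℝ) : Set (X × X) :=
  ⋃ r ∈ Ioo 0 δ, ⋂ n ∈ Icc 1 ⌊r⁻¹ ^ N⌋₊, {p | r < d (T^[n] p.1) p.2}

theorem mem_lateEntranceSet {δ : ℝ} :
    (x, y) ∈ lateEntranceSet d T N δ ↔
      ∃ r ∈ Ioo 0 δ, ∀ n ∈ Icc 1 ⌊r⁻¹ ^ N⌋₊, r < d (T^[n] x) y := by
  simp only [lateEntranceSet, mem_iUnion₂, mem_iInter₂, mem_ofPred_eq, exists_prop]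

theorem isOpen_lateEntranceSet [TopologicalSpace X] (hd : Continuous (Function.uncurry d))
    (hT : Continuous T) (N : ℕ) (δ : ℝ) : IsOpen (lateEntranceSet d T N δ) :=
  isOpen_biUnion fun _ _ => (finite_Icc _ _).isOpen_biInter fun n _ =>
    isOpen_lt continuous_const <|
      hd.comp (((hT.iterate n).comp continuous_fst).prodMk continuous_snd)

theorem mem_lateEntranceSet_of_forall_le {δ ε : ℝ} (hδ : 0 < δ) (hε : 0 < ε)
    (h : ∀ n, ε ≤ d (T^[n] x) y) (N : ℕ) : (x, y) ∈ lateEntranceSet d T N δ := by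
  have hmin : 0 < min δ ε := lt_min hδ hε
  have hhalf : min δ ε / 2 < min δ ε := half_lt_self hmin
  exact mem_lateEntranceSet.2 ⟨min δ ε / 2, ⟨half_pos hmin, hhalf.trans_le (min_le_left _ _)⟩,
    fun n _ => hhalf.trans_le ((min_le_right _ _).trans (h n))⟩

theorem upperWaitRate_eq_top (h : ∀ N : ℕ, (x, y) ∈ lateEntranceSet d T N (1 / (N + 1))) :
    upperWaitRate d T x y = ⊤ := by
  choose r hr hlate using fun N => mem_lateEntranceSet.1 (h N)
  have hr_lt_one (N : ℕ) : r N < 1 :=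
    (hr N).2.trans_le <| div_le_one_of_le₀ (by simp) (by positivity)
  have hr_tendsto : Tendsto r atTop (𝓝[>] 0) :=
    tendsto_nhdsWithin_iff.2 ⟨squeeze_zero (fun N => (hr N).1.le) (fun N => (hr N).2.le)
      tendsto_one_div_add_atTop_nhds_zero_nat, .of_forall fun N => (hr N).1⟩
  have hratio : Tendsto (waitRatio d T x y ∘ r) atTop (𝓝 ⊤) :=
    tendsto_nhds_top_mono ENNReal.tendsto_nat_nhds_top <|
      .of_forall fun N => natCast_le_waitRatio (hr N).1 (hr_lt_one N) (hlate N)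
  exact top_unique <| hratio.limsup_eq.ge.trans <|
    limsup_le_limsup_of_le (f := map r atTop) hr_tendsto

end Entrance

section AverageMap

variable {ι Ω X : Type*} [Fintype ι] [MeasurableSpace Ω] [MeasurableSpace X]

/-- The average of the push-forwards of the measure `μ` under the members of a finite family of
maps. -/
noncomputable def averageMap (ψ : ι → Ω → X) (μ : Measure Ω) : Measure X :=
  (Fintype.card ι : ℝ≥0∞)⁻¹ • Measure.sum fun i => μ.map (ψ i)

theorem isProbabilityMeasure_averageMap [Nonempty ι] {ψ : ι → Ω → X}
    (hψ : ∀ i, Measurable (ψ i)) (μ : Measure Ω) [IsProbabilityMeasure μ] :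
    IsProbabilityMeasure (averageMap ψ μ) where
  measure_univ := by
    have hmap (i : ι) : μ.map (ψ i) univ = 1 := by
      rw [Measure.map_apply (hψ i) .univ, preimage_univ, measure_univ]
    simp [averageMap, hmap, ENNReal.inv_mul_cancel]

theorem map_averageMap_eq_self {S : X → X} {T : Ω → Ω} {ψ : ι → Ω → X} {μ : Measure Ω}
    (hS : Measurable S) (hT : Measurable T) (hψ : ∀ i, Measurable (ψ i))
    (hsemiconj : ∀ i, Function.Semiconj (ψ i) T S) (hμ : μ.map T = μ) :
    (averageMap ψ μ).map S = averageMap ψ μ := by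
  have hmap (i : ι) : (μ.map (ψ i)).map S = μ.map (ψ i) := by
    rw [Measure.map_map hS (hψ i), ← (hsemiconj i).comp_eq, ← Measure.map_map (hψ i) hT, hμ]
  simp only [averageMap, Measure.map_smul, Measure.map_sum hS.aemeasurable, hmap]

theorem averageMap_prod_self_le {ψ : ι → Ω → X} {C : Set (X × X)} (hψ : ∀ i, Measurable (ψ i))
    (hC : MeasurableSet C) (hdisj : Pairwise fun i j => ∀ x y, (ψ i x, ψ j y) ∉ C)
    (μ : Measure Ω) [IsProbabilityMeasure μ] :
    (averageMap ψ μ).prod (averageMap ψ μ) C ≤ (Fintype.card ι : ℝ≥0∞)⁻¹ := by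
  classical
  have hpair (i j : ι) : (μ.map (ψ i)).prod (μ.map (ψ j)) C ≤ if i = j then 1 else 0 := by
    rw [Measure.map_prod_map _ _ (hψ i) (hψ j),
      Measure.map_apply ((hψ i).prodMap (hψ j)) hC]
    split_ifs with hij
    · exact prob_le_one
    · have hempty : Prod.map (ψ i) (ψ j) ⁻¹' C = ∅ :=
        eq_empty_of_forall_notMem fun p => hdisj hij p.1 p.2
      rw [hempty, measure_empty]
  set c : ℝ≥0∞ := (Fintype.card ι : ℝ≥0∞)⁻¹
  calc (averageMap ψ μ).prod (averageMap ψ μ) C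
      = c * (c * ∑ i, ∑ j, (μ.map (ψ i)).prod (μ.map (ψ j)) C) := by
        simp only [averageMap, Measure.prod_smul_left, Measure.prod_smul_right, Measure.prod_sum,
          Measure.smul_apply, smul_eq_mul, Measure.sum_apply _ hC, tsum_fintype,
          Fintype.sum_prod_type, c]
    _ ≤ c * (c * ∑ i : ι, ∑ j, if i = j then 1 else 0) := by
        gcongr with i _ j
        exact hpair i j
    _ = c * (c * Fintype.card ι) := by simp
    _ ≤ c := mul_le_of_le_one_right' (ENNReal.inv_mul_le_one _)

theorem tendsto_lintegral_averageMap [Nonempty ι] [TopologicalSpace X] [OpensMeasurableSpace X]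
    {α : Type*} {l : Filter α} [l.IsCountablyGenerated] {ψ : α → ι → Ω → X} {g : Ω → X}
    {μ : Measure Ω} [IsFiniteMeasure μ] (hψ : ∀ a i, Measurable (ψ a i))
    (hlim : ∀ i x, Tendsto (fun a => ψ a i x) l (𝓝 (g x)))
    (f : BoundedContinuousFunction X ℝ≥0) :
    Tendsto (fun a => ∫⁻ x, f x ∂averageMap (ψ a) μ) l (𝓝 (∫⁻ x, f (g x) ∂μ)) := by
  have hf : Measurable fun x => (f x : ℝ≥0∞) := f.continuous.measurable.coe_nnreal_ennreal
  have hterm (i : ι) : Tendsto (fun a => ∫⁻ x, f (ψ a i x) ∂μ) l (𝓝 (∫⁻ x, f (g x) ∂μ)) := by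
    refine tendsto_lintegral_filter_of_dominated_convergence (fun _ => (nndist 0 f : ℝ≥0∞))
      (.of_forall fun a => hf.comp (hψ a i))
      (.of_forall fun a => .of_forall fun x => ?_) ?_ (.of_forall fun x => ?_)
    · exact_mod_cast f.apply_le_nndist_zero (ψ a i x)
    · simp [ENNReal.mul_eq_top]
    · exact ENNReal.tendsto_coe.2 ((f.continuous.tendsto _).comp (hlim i x))
  have havg := ENNReal.Tendsto.const_mul (a := (Fintype.card ι : ℝ≥0∞)⁻¹)
    (tendsto_finsetSum Finset.univ fun i _ => hterm i) (.inr (by simp))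
  simpa [averageMap, lintegral_sum_measure, lintegral_map hf (hψ _ _), ← mul_assoc,
    ENNReal.inv_mul_cancel] using havg

end AverageMap

/-- The space `M(T)` of `T`-invariant probability measures, with the weak topology. -/
abbrev InvariantProbabilityMeasure {X : Type*} [MeasurableSpace X] (T : X → X) :=
  {ν : ProbabilityMeasure X // ν.toMeasure.map T = ν.toMeasure}

theorem setOf_measure_eq_zero_mem_residual {I Y : Type*} [TopologicalSpace I] [TopologicalSpace Y]
    [HasOuterApproxClosed Y] [MeasurableSpace Y] [OpensMeasurableSpace Y]
    {f : I → ProbabilityMeasure Y} {C : Set Y} (hf : Continuous f) (hC : IsClosed C)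
    (hdense : ∀ ε > 0, Dense {i | (f i : Measure Y) C < ε}) :
    {i | (f i : Measure Y) C = 0} ∈ residual I := by
  have hopen (ε : ℝ≥0∞) : IsOpen {i | (f i : Measure Y) C < ε} :=
    isOpen_iff_mem_nhds.2 fun i hi => eventually_lt_of_limsup_lt <|
      (ProbabilityMeasure.limsup_measure_closed_le_of_tendsto (hf.tendsto i) hC).trans_lt hi
  have hinter : (⋂ n : ℕ, {i | (f i : Measure Y) C < (n : ℝ≥0∞)⁻¹}) ∈ residual I :=
    countable_iInter_mem.2 fun n => residual_of_dense_open (hopen _) (hdense _ (by simp))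
  refine mem_of_superset hinter fun i hi => ?_
  by_contra hne
  obtain ⟨n, hn⟩ := ENNReal.exists_inv_nat_lt hne
  exact hn.not_gt (mem_iInter.1 hi n)

section Generic

variable {X : Type*} [TopologicalSpace X] [MeasurableSpace X] [OpensMeasurableSpace X]
  {T : X → X} {ψ : ℕ → ℕ → X → X}

theorem dense_setOf_prod_self_lt {C : Set (X × X)} (hT : Measurable T)
    (hC : MeasurableSet C) (hψ : ∀ m i, Measurable (ψ m i))
    (hcomm : ∀ m i, Function.Commute (ψ m i) T)
    (hlim : ∀ i x, Tendsto (fun m => ψ m i x) atTop (𝓝 x))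
    (hdisj : ∀ m, Pairwise fun i j => ∀ x y, (ψ m i x, ψ m j y) ∉ C) {ε : ℝ≥0∞} (hε : 0 < ε) :
    Dense {μ : InvariantProbabilityMeasure T | μ.1.toMeasure.prod μ.1.toMeasure C < ε} := by
  intro μ
  obtain ⟨k, hk⟩ := ENNReal.exists_inv_nat_lt hε.ne'
  let avg (m : ℕ) : Measure X := averageMap (fun i : Fin (k + 1) => ψ m i) μ.1
  have hprob (m : ℕ) : IsProbabilityMeasure (avg m) :=
    isProbabilityMeasure_averageMap (fun _ => hψ m _) _
  have hinv (m : ℕ) : (avg m).map T = avg m :=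
    map_averageMap_eq_self hT hT (fun _ => hψ m _) (fun _ => hcomm m _) μ.2
  let ν (m : ℕ) : InvariantProbabilityMeasure T := ⟨⟨avg m, hprob m⟩, hinv m⟩
  have hν : Tendsto ν atTop (𝓝 μ) := by
    rw [tendsto_subtype_rng, ProbabilityMeasure.tendsto_iff_forall_lintegral_tendsto]
    exact tendsto_lintegral_averageMap (g := id) (fun _ _ => hψ _ _) fun _ => hlim _
  refine mem_closure_of_tendsto hν (.of_forall fun m => ?_)
  calc (avg m).prod (avg m) C
      ≤ (Fintype.card (Fin (k + 1)) : ℝ≥0∞)⁻¹ :=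
        averageMap_prod_self_le (fun _ => hψ m _) hC
          (fun i j hij => hdisj m (Fin.val_ne_of_ne hij)) _
    _ ≤ (k : ℝ≥0∞)⁻¹ := by simp
    _ < ε := hk

theorem ae_upperWaitRate_eq_top_mem_residual [SecondCountableTopology X]
    [TopologicalSpace.PseudoMetrizableSpace X] {d : X → X → ℝ}
    (hd : Continuous (Function.uncurry d)) (hT : Continuous T) (hTm : Measurable T)
    (hψ : ∀ m i, Measurable (ψ m i)) (hcomm : ∀ m i, Function.Commute (ψ m i) T)
    (hlim : ∀ i x, Tendsto (fun m => ψ m i x) atTop (𝓝 x))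
    (hsep : ∀ m, Pairwise fun i j => ∀ x y, ∃ ε > 0, ∀ n, ε ≤ d (T^[n] (ψ m i x)) (ψ m j y)) :
    {μ : InvariantProbabilityMeasure T | ∀ᵐ p ∂(μ.1.toMeasure.prod μ.1.toMeasure),
      upperWaitRate d T p.1 p.2 = ⊤} ∈ residual (InvariantProbabilityMeasure T) := by
  let L (N : ℕ) : Set (X × X) := lateEntranceSet d T N (1 / (N + 1))
  have hclosed (N : ℕ) : IsClosed (L N)ᶜ := (isOpen_lateEntranceSet hd hT N _).isClosed_compl
  have hdisj (N m : ℕ) : Pairwise fun i j => ∀ x y, (ψ m i x, ψ m j y) ∉ (L N)ᶜ := by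
    intro i j hij x y hxy
    obtain ⟨ε, hε, hle⟩ := hsep m hij x y
    exact hxy (mem_lateEntranceSet_of_forall_le (by positivity) hε hle N)
  have hprod : Continuous fun μ : InvariantProbabilityMeasure T => μ.1.prod μ.1 := by fun_prop
  have hnull (N : ℕ) : {μ : InvariantProbabilityMeasure T |
      μ.1.toMeasure.prod μ.1.toMeasure (L N)ᶜ = 0} ∈ residual _ :=
    setOf_measure_eq_zero_mem_residual hprod (hclosed N) fun _ hε =>
      dense_setOf_prod_self_lt hTm (hclosed N).measurableSet hψ hcomm hlim (hdisj N) hε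
  filter_upwards [countable_iInter_mem.2 hnull] with μ hμ
  have hlate : ∀ᵐ p ∂(μ.1.toMeasure.prod μ.1.toMeasure), ∀ N, p ∈ L N :=
    ae_all_iff.2 fun N => mem_ae_iff.2 (mem_iInter.1 hμ N)
  filter_upwards [hlate] with p hp using upperWaitRate_eq_top hp

end Generic

section Approximation

variable {Ω M : Type*} [MeasurableSpace Ω] [MetricSpace M] [PerfectSpace M]

theorem exists_simpleFunc_dist_lt_disjoint_range (s : SimpleFunc Ω M) {A : Set M} (hA : A.Finite)
    {ε : ℝ} (hε : 0 < ε) :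
    ∃ f : SimpleFunc Ω M, (∀ x, dist (f x) (s x) < ε) ∧ Disjoint A (range f) := by
  have hpoint (p : M) : ∃ q, dist q p < ε ∧ q ∉ A :=
    (infinite_of_mem_nhds p (ball_mem_nhds p hε)).exists_notMem_finite hA
  choose ψ hdist hnotMem using hpoint
  refine ⟨s.map ψ, fun x => hdist (s x), disjoint_right.2 ?_⟩
  rintro _ ⟨x, rfl⟩
  exact hnotMem (s x)

theorem exists_seq_simpleFunc_dist_lt_pairwise_disjoint_range (s : SimpleFunc Ω M) {ε : ℝ}
    (hε : 0 < ε) :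
    ∃ φ : ℕ → SimpleFunc Ω M, (∀ n x, dist (φ n x) (s x) < ε) ∧
      Pairwise fun i j => Disjoint (range (φ i)) (range (φ j)) := by
  have : Std.Symm fun f g : SimpleFunc Ω M => Disjoint (range f) (range g) :=
    ⟨fun _ _ h => h.symm⟩
  refine exists_seq_of_forall_finset_exists' (fun f : SimpleFunc Ω M => ∀ x, dist (f x) (s x) < ε)
    (fun f g => Disjoint (range f) (range g)) fun F _ => ?_
  have hfin : (⋃ f ∈ F, range (f : SimpleFunc Ω M)).Finite :=
    F.finite_toSet.biUnion fun f _ => f.finite_range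
  obtain ⟨g, hdist, hdisj⟩ := exists_simpleFunc_dist_lt_disjoint_range s hfin hε
  exact ⟨g, hdist, disjoint_iUnion₂_left.1 hdisj⟩

theorem exists_simpleFunc_tendsto_pairwise_disjoint_range [TopologicalSpace.SeparableSpace M]
    [MeasurableSpace M] [OpensMeasurableSpace M] {g : Ω → M} (hg : Measurable g) :
    ∃ φ : ℕ → ℕ → SimpleFunc Ω M, (∀ i x, Tendsto (fun m => φ m i x) atTop (𝓝 (g x))) ∧
      ∀ m, Pairwise fun i j => Disjoint (range (φ m i)) (range (φ m j)) := by
  rcases isEmpty_or_nonempty Ω with _ | ⟨⟨x₀⟩⟩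
  · exact ⟨fun _ _ => .ofIsEmpty, fun _ => isEmptyElim, fun _ _ _ _ => by simp [range_eq_empty]⟩
  let s : ℕ → SimpleFunc Ω M := SimpleFunc.approxOn g hg univ (g x₀) (mem_univ _)
  have hs (x : Ω) : Tendsto (fun m => s m x) atTop (𝓝 (g x)) :=
    SimpleFunc.tendsto_approxOn hg (mem_univ _) (by simp)
  choose φ hdist hdisj using fun m : ℕ =>
    exists_seq_simpleFunc_dist_lt_pairwise_disjoint_range (s m) (ε := 1 / (m + 1)) (by positivity)
  refine ⟨φ, fun i x => (tendsto_iff_of_dist ?_).1 (hs x), hdisj⟩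
  refine squeeze_zero (fun _ => dist_nonneg) (fun m => ?_) tendsto_one_div_add_atTop_nhds_zero_nat
  simpa only [dist_comm] using (hdist m i x).le

end Approximation

section FullShift

theorem summable_one_half_pow_natAbs : Summable fun n : ℤ => (1 / 2 : ℝ) ^ n.natAbs :=
  .of_nat_of_neg (by simpa using summable_geometric_two) (by simpa using summable_geometric_two)

variable {M : Type*}

theorem continuous_fullShift [TopologicalSpace M] :
    Continuous (fullShift : (ℤ → M) → ℤ → M) := by
  unfold fullShift
  fun_prop

theorem measurable_fullShift [MeasurableSpace M] :
    Measurable (fullShift : (ℤ → M) → ℤ → M) := by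
  unfold fullShift
  fun_prop

theorem iterate_fullShift_apply (n : ℕ) (x : ℤ → M) (i : ℤ) :
    fullShift^[n] x i = x (i - n) := by
  induction n generalizing x with
  | zero => simp
  | succ n ih =>
    rw [Function.iterate_succ_apply, ih, fullShift, Nat.cast_succ, sub_sub]

variable [MetricSpace M]

theorem norm_shiftDist_term_le (n : ℤ) (a b : M) :
    ‖(1 / 2 : ℝ) ^ n.natAbs * (dist a b / (1 + dist a b))‖ ≤ (1 / 2) ^ n.natAbs := by
  rw [Real.norm_of_nonneg (by positivity)]
  exact mul_le_of_le_one_right (by positivity) (div_le_one_of_le₀ (by simp) (by positivity))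

theorem continuous_shiftDist :
    Continuous (Function.uncurry (shiftDist : (ℤ → M) → (ℤ → M) → ℝ)) := by
  refine continuous_tsum (fun n => continuous_const.mul ?_) summable_one_half_pow_natAbs
    fun n p => norm_shiftDist_term_le n (p.1 n) (p.2 n)
  exact Continuous.div (by fun_prop) (by fun_prop) fun p => by positivity

theorem dist_div_one_add_dist_le_shiftDist (x y : ℤ → M) :
    dist (x 0) (y 0) / (1 + dist (x 0) (y 0)) ≤ shiftDist x y := by
  have hsum : Summable fun n : ℤ =>
      (1 / 2 : ℝ) ^ n.natAbs * (dist (x n) (y n) / (1 + dist (x n) (y n))) :=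
    .of_norm_bounded summable_one_half_pow_natAbs fun n => norm_shiftDist_term_le n (x n) (y n)
  simpa [shiftDist] using hsum.le_tsum 0 fun n _ => by positivity

theorem exists_pos_forall_le_shiftDist_iterate_fullShift {K C : Set M} (hK : IsCompact K)
    (hC : IsClosed C) (hKC : Disjoint K C) :
    ∃ ε > 0, ∀ x y : ℤ → M, (∀ i, x i ∈ K) → y 0 ∈ C →
      ∀ n, ε ≤ shiftDist (fullShift^[n] x) y := by
  obtain ⟨r, hr, hlt⟩ := exists_pos_forall_lt_edist hK hC hKC
  refine ⟨r / (1 + r), by positivity, fun x y hx hy n => ?_⟩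
  have hle : (r : ℝ) ≤ dist (fullShift^[n] x 0) (y 0) := by
    rw [iterate_fullShift_apply]
    have := hlt _ (hx (0 - n)) _ hy
    rw [edist_nndist, ENNReal.coe_lt_coe] at this
    exact_mod_cast this.le
  refine le_trans ?_ (dist_div_one_add_dist_le_shiftDist _ _)
  rw [div_le_div_iff₀ (by positivity) (by positivity)]
  linarith

theorem fullShift_upperWaitRateInfinite_residual_general [TopologicalSpace.SeparableSpace M]
    [PerfectSpace M] [MeasurableSpace M] [OpensMeasurableSpace M] :
    {μ : {ν : ProbabilityMeasure (ℤ → M) // ν.toMeasure.map fullShift = ν.toMeasure} |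
        ∀ᵐ p ∂(μ.1.toMeasure.prod μ.1.toMeasure),
          upperWaitRate shiftDist fullShift p.1 p.2 = ⊤} ∈
      residual {ν : ProbabilityMeasure (ℤ → M) // ν.toMeasure.map fullShift = ν.toMeasure} := by
  have : SecondCountableTopology M := UniformSpace.secondCountable_of_separable M
  obtain ⟨φ, hlim, hdisj⟩ := exists_simpleFunc_tendsto_pairwise_disjoint_range (M := M)
    measurable_id
  refine ae_upperWaitRate_eq_top_mem_residual (ψ := fun m i x => φ m i ∘ x)
    continuous_shiftDist continuous_fullShift measurable_fullShift ?_ ?_ ?_ ?_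
  · exact fun m i => measurable_pi_lambda _ fun n =>
      (φ m i).measurable.comp (measurable_pi_apply n)
  · exact fun m i x => rfl
  · exact fun i x => tendsto_pi_nhds.2 fun n => hlim i (x n)
  · intro m i j hij x y
    obtain ⟨ε, hε, hle⟩ := exists_pos_forall_le_shiftDist_iterate_fullShift
      (φ m i).finite_range.isCompact (φ m j).finite_range.isClosed (hdisj m hij)
    exact ⟨ε, hε, hle _ _ (fun n => mem_range_self (x n)) (mem_range_self (y 0))⟩

end FullShift

/-- For the full shift on `ℤ → M` over a perfect Polish metric space `M`,
the set of invariant measures whose upper quantitative waiting time indicator is infinite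
`(μ × μ)`-almost everywhere is a residual subset of `M(T)`. -/
theorem fullShift_upperWaitRateInfinite_residual {M : Type*} [MetricSpace M] [CompleteSpace M]
    [TopologicalSpace.SeparableSpace M] [PerfectSpace M]
    [MeasurableSpace M] [BorelSpace M] :
    {μ : {ν : ProbabilityMeasure (ℤ → M) // ν.toMeasure.map fullShift = ν.toMeasure} |
        ∀ᵐ p ∂(μ.1.toMeasure.prod μ.1.toMeasure),
          upperWaitRate shiftDist fullShift p.1 p.2 = ⊤} ∈
      residual {ν : ProbabilityMeasure (ℤ → M) // ν.toMeasure.map fullShift = ν.toMeasure} :=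
  fullShift_upperWaitRateInfinite_residual_general
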